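/- Assume additionally α ≠ 0. Then L_3 M = M L_3, where L_3 is the symmetric 2(N+1)×2(N+1) real matrix whose only nonzero entries (1-based indexing, together with the symmetric positions) are, for k = 1, …, N+1: (L_3)_{2k,2k} = (k-1)(n+k)p(n-p+1)/((n+2)(p+1)(n-p)); (L_3)_{2k-1,2k-1} = (k-1)(n+k)/(n+2); (L_3)_{2k-1,2k} = (k-1)(n-p+N+1)(p+N+1)(n+k)√p / (α(p+1)(n+2)√((n-p)(p+k-1)(p+k)(n-p+k)(n-p+k-1))); and for k = 1, …, N: (L_3)_{2k-1,2k+1} = ((N-k+1)(N+n+k+1)/(α(n+2))) · √( k(p+k-1)(n-p+1+k)(n+k) / ((n+2k-1)(n+2k+1)(p+k)(n-p+k)) ) and (L_3)_{2k,2k+2} = (p(n-p+1)(N-k+1)(N+n+k+1)/(α(n+2)(n-p)(p+1))) · √( k(n-p+k-1)(p+k+1)(n+k) / ((n+2k-1)(n+2k+1)(p+k)(n-p+k)) ). -/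

import Mathlib

open Matrix

/-- Pochhammer symbol `(a)_k = a (a+1) ⋯ (a+k-1)`. -/
noncomputable def poch (a : ℝ) (k : ℕ) : ℝ := ∏ i ∈ Finset.range k, (a + i)

/-- Gegenbauer polynomial `C_w^λ(x)`, with the convention `C_w^λ = 0` for `w < 0`. -/
noncomputable def geg (l : ℝ) (w : ℤ) (x : ℝ) : ℝ :=
  if w < 0 then 0 else
    poch (2 * l) w.toNat / (w.toNat.factorial : ℝ) *
      ∑ k ∈ Finset.range (w.toNat + 1),
        (poch (-(w.toNat : ℝ)) k * poch ((w.toNat : ℝ) + 2 * l) k) /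
            (poch (l + 1 / 2) k * (k.factorial : ℝ)) * ((1 - x) / 2) ^ k

/-- The weight matrix `W_{p,n}(x)`. -/
noncomputable def Wmat (n : ℕ) (p : ℝ) (x : ℝ) : Matrix (Fin 2) (Fin 2) ℝ :=
  (1 - x ^ 2) ^ ((n : ℝ) / 2 - 1) •
    !![p * x ^ 2 + (n : ℝ) - p, -(n : ℝ) * x; -(n : ℝ) * x, ((n : ℝ) - p) * x ^ 2 + p]

/-- The matrix valued polynomial `P_w`. -/
noncomputable def Pmat (n : ℕ) (p : ℝ) (w : ℕ) (x : ℝ) : Matrix (Fin 2) (Fin 2) ℝ :=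
  !![1 / ((n : ℝ) + 1) * geg (((n : ℝ) + 1) / 2) (w : ℤ) x +
        1 / (p + w) * geg (((n : ℝ) + 3) / 2) ((w : ℤ) - 2) x,
      1 / (p + w) * geg (((n : ℝ) + 3) / 2) ((w : ℤ) - 1) x;
      1 / ((n : ℝ) - p + w) * geg (((n : ℝ) + 3) / 2) ((w : ℤ) - 1) x,
      1 / ((n : ℝ) + 1) * geg (((n : ℝ) + 1) / 2) (w : ℤ) x +
        1 / ((n : ℝ) - p + w) * geg (((n : ℝ) + 3) / 2) ((w : ℤ) - 2) x]

/-- The normalizing matrix `S_w`: the (diagonal, positive definite) inverse square root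
of `‖P_w‖² = ∫_{-1}^1 P_w W_{p,n} P_w^T dx`, given explicitly. -/
noncomputable def Smat (n : ℕ) (p : ℝ) (w : ℕ) : Matrix (Fin 2) (Fin 2) ℝ :=
  Real.sqrt (((w.factorial : ℝ) * ((n : ℝ) + 1) * ((n : ℝ) + 2 * w + 1) *
        Real.Gamma ((n : ℝ) / 2 + 3 / 2)) /
      (Real.sqrt Real.pi * 2 ^ (w / 2) * Real.Gamma ((n : ℝ) / 2 + 1 + (w / 2 : ℕ)) *
        ∏ k ∈ Finset.range ((w + 1) / 2), ((n : ℝ) + 2 * k + 1))) •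
    Matrix.diagonal ![Real.sqrt ((p + w) / (p * ((n : ℝ) - p + w + 1))),
      Real.sqrt (((n : ℝ) - p + w) / (((n : ℝ) - p) * (p + w + 1)))]

/-- The orthonormal matrix valued polynomials `Q_w = S_w P_w`. -/
noncomputable def Qmat (n : ℕ) (p : ℝ) (w : ℕ) (x : ℝ) : Matrix (Fin 2) (Fin 2) ℝ :=
  Smat n p w * Pmat n p w x

/-- The `2 × 2` block `M^{i,j} = ∫_{-1}^α Q_i(x) W_{p,n}(x) Q_j(x)^T dx`. -/
noncomputable def Mblk (n : ℕ) (p α : ℝ) (i j : ℕ) : Matrix (Fin 2) (Fin 2) ℝ :=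
  Matrix.of fun a b : Fin 2 =>
    ∫ x in (-1 : ℝ)..α, (Qmat n p i x * Wmat n p x * (Qmat n p j x)ᵀ) a b

/-- The full `2(N+1) × 2(N+1)` matrix `M`, with (1-based) entries
`M_{2i+1,2j+1} = M^{i,j}_{11}`, `M_{2i+1,2j+2} = M^{i,j}_{12}`,
`M_{2i+2,2j+1} = M^{i,j}_{21}`, `M_{2i+2,2j+2} = M^{i,j}_{22}`. -/
noncomputable def Mfull (n : ℕ) (p α : ℝ) (N : ℕ) :
    Matrix (Fin (2 * (N + 1))) (Fin (2 * (N + 1))) ℝ :=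
  Matrix.of fun r c =>
    Mblk n p α (r.val / 2) (c.val / 2) ⟨r.val % 2, by omega⟩ ⟨c.val % 2, by omega⟩

/-- The even diagonal entries `(L_3)_{2k,2k}`. -/
noncomputable def L3dE (n : ℕ) (p : ℝ) (k : ℕ) : ℝ :=
  ((k : ℝ) - 1) * ((n : ℝ) + k) * p * ((n : ℝ) - p + 1) /
    (((n : ℝ) + 2) * (p + 1) * ((n : ℝ) - p))

/-- The odd diagonal entries `(L_3)_{2k-1,2k-1}`. -/
noncomputable def L3dO (n : ℕ) (k : ℕ) : ℝ :=
  ((k : ℝ) - 1) * ((n : ℝ) + k) / ((n : ℝ) + 2)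

/-- The entries `(L_3)_{2k-1,2k}`. -/
noncomputable def L3b (n : ℕ) (p α : ℝ) (N : ℕ) (k : ℕ) : ℝ :=
  ((k : ℝ) - 1) * ((n : ℝ) - p + N + 1) * (p + N + 1) * ((n : ℝ) + k) * Real.sqrt p /
    (α * (p + 1) * ((n : ℝ) + 2) *
      Real.sqrt (((n : ℝ) - p) * (p + k - 1) * (p + k) * ((n : ℝ) - p + k) *
        ((n : ℝ) - p + k - 1)))

/-- The entries `(L_3)_{2k-1,2k+1}`. -/
noncomputable def L3e (n : ℕ) (p α : ℝ) (N : ℕ) (k : ℕ) : ℝ :=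
  ((N : ℝ) - k + 1) * ((N : ℝ) + n + k + 1) / (α * ((n : ℝ) + 2)) *
    Real.sqrt ((k : ℝ) * (p + k - 1) * ((n : ℝ) - p + 1 + k) * ((n : ℝ) + k) /
      (((n : ℝ) + 2 * k - 1) * ((n : ℝ) + 2 * k + 1) * (p + k) * ((n : ℝ) - p + k)))

/-- The entries `(L_3)_{2k,2k+2}`. -/
noncomputable def L3f (n : ℕ) (p α : ℝ) (N : ℕ) (k : ℕ) : ℝ :=
  p * ((n : ℝ) - p + 1) * ((N : ℝ) - k + 1) * ((N : ℝ) + n + k + 1) /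
      (α * ((n : ℝ) + 2) * ((n : ℝ) - p) * (p + 1)) *
    Real.sqrt ((k : ℝ) * ((n : ℝ) - p + k - 1) * (p + k + 1) * ((n : ℝ) + k) /
      (((n : ℝ) + 2 * k - 1) * ((n : ℝ) + 2 * k + 1) * (p + k) * ((n : ℝ) - p + k)))

/-- The symmetric matrix `L_3`: in 1-based indexing its only nonzero entries (up to
symmetry) are `(L_3)_{2k,2k}`, `(L_3)_{2k-1,2k-1}`, `(L_3)_{2k-1,2k}` for
`k = 1, …, N+1`, and `(L_3)_{2k-1,2k+1}`, `(L_3)_{2k,2k+2}` for `k = 1, …, N`. -/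
noncomputable def L3 (n : ℕ) (p α : ℝ) (N : ℕ) :
    Matrix (Fin (2 * (N + 1))) (Fin (2 * (N + 1))) ℝ :=
  Matrix.of fun i j =>
    let r := i.val + 1
    let s := j.val + 1
    if r = s then (if r % 2 = 0 then L3dE n p (r / 2) else L3dO n ((r + 1) / 2))
    else if s = r + 1 ∧ r % 2 = 1 then L3b n p α N (s / 2)
    else if r = s + 1 ∧ s % 2 = 1 then L3b n p α N (r / 2)
    else if s = r + 2 ∧ r % 2 = 1 then L3e n p α N ((r + 1) / 2)
    else if r = s + 2 ∧ s % 2 = 1 then L3e n p α N ((s + 1) / 2)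
    else if s = r + 2 ∧ r % 2 = 0 then L3f n p α N (r / 2)
    else if r = s + 2 ∧ s % 2 = 0 then L3f n p α N (s / 2)
    else 0

/-!
The rows of `Q_0, Q_1, …` are eigenfunctions of a second-order differential operator `E` that is
symmetric for `W = W_{p,n}` and has a divergence form, so that on `[-1, α]` the defect of symmetry
of `E` is a boundary term at `α`. For the algebraic Heun operator
`T = (α - x) E + E (α - x) + κ Y`, where `Y W` is symmetric, the boundary term carries the factor
`α - x` and vanishes: `T` is symmetric for `∫_{-1}^α F W Gᵀ dx`. The three-term recurrence gives `T`
a band matrix in the basis of rows, and a suitable `κ` makes it annihilate the coupling between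
`Q_N` and `Q_{N+1}`. The truncation of this matrix to `Q_0, …, Q_N` is a multiple of the symmetric
matrix `L_3`, and a symmetric matrix representing a symmetric operator commutes with the Gram
matrix of the basis, here `M`.
-/

section

open Polynomial MeasureTheory

/-! ### Gegenbauer polynomials -/

lemma poch_succ (a : ℝ) (k : ℕ) : poch a (k + 1) = poch a k * (a + k) :=
  Finset.prod_range_succ _ _

lemma mul_poch_add_one (a : ℝ) (k : ℕ) : a * poch (a + 1) k = poch a k * (a + k) := by
  induction k with
  | zero => simp [poch]
  | succ k ih =>
    rw [poch_succ, poch_succ, ← mul_assoc, ih]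
    push_cast
    ring

lemma poch_pos {a : ℝ} (ha : 0 < a) (k : ℕ) : 0 < poch a k :=
  Finset.prod_pos fun _ _ => by positivity

lemma poch_neg_natCast_eq_zero {w k : ℕ} (h : w < k) : poch (-(w : ℝ)) k = 0 :=
  Finset.prod_eq_zero (Finset.mem_range.mpr h) (neg_add_cancel _)

/-- The coefficient of `t ^ k` in the terminating hypergeometric series
`₂F₁(-w, w + 2l; l + 1/2; t)`. -/
noncomputable def zonalCoeff (l : ℝ) (w k : ℕ) : ℝ :=
  poch (-(w : ℝ)) k * poch ((w : ℝ) + 2 * l) k / (poch (l + 1 / 2) k * k.factorial)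

lemma zonalCoeff_eq_zero (l : ℝ) {w k : ℕ} (h : w < k) : zonalCoeff l w k = 0 := by
  rw [zonalCoeff, poch_neg_natCast_eq_zero h, zero_mul, zero_div]

lemma zonalCoeff_succ_right {l : ℝ} (hl : -(1 / 2) < l) (w k : ℕ) :
    (l + 1 / 2 + k) * (k + 1) * zonalCoeff l w (k + 1) =
      (k - w) * (w + 2 * l + k) * zonalCoeff l w k := by
  have hl' : 0 < l + 1 / 2 := by linarith
  simp only [zonalCoeff, poch_succ, Nat.factorial_succ]
  generalize l + 1 / 2 = b at hl' ⊢
  have := poch_pos hl' k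
  have : 0 < b + k := by positivity
  push_cast
  field_simp
  ring

lemma zonalCoeff_succ_left (l : ℝ) (w k : ℕ) :
    (w + 1 - k) * (w + 2 * l) * zonalCoeff l (w + 1) k =
      (w + 1) * (w + 2 * l + k) * zonalCoeff l w k := by
  have h₁ := mul_poch_add_one (-(w + 1 : ℝ)) k
  have h₂ := mul_poch_add_one ((w : ℝ) + 2 * l) k
  rw [show -(w + 1 : ℝ) + 1 = -w by ring] at h₁
  simp only [zonalCoeff, mul_div_assoc', Nat.cast_add, Nat.cast_one,
    show (w : ℝ) + 1 + 2 * l = w + 2 * l + 1 by ring]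
  congr 1
  linear_combination
    (-(poch (-(w + 1 : ℝ)) k * (-(w + 1) + k))) * h₂ + (poch (w + 2 * l) k * (w + 2 * l + k)) * h₁

/-- The polynomial `₂F₁(-w, w + 2l; l + 1/2; t)`. -/
noncomputable def zonalSeries (l : ℝ) (w : ℕ) : ℝ[X] :=
  ∑ k ∈ Finset.range (w + 1), C (zonalCoeff l w k) * X ^ k

lemma coeff_zonalSeries (l : ℝ) (w k : ℕ) : (zonalSeries l w).coeff k = zonalCoeff l w k := by
  simp only [zonalSeries, finsetSum_coeff, coeff_C_mul, coeff_X_pow, mul_ite, mul_one, mul_zero,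
    Finset.sum_ite_eq, Finset.mem_range]
  split_ifs with h
  · rfl
  · exact (zonalCoeff_eq_zero l (by omega)).symm

lemma derivative_zonalSeries_lower {l : ℝ} (hl : -(1 / 2) < l) (w : ℕ) :
    C (w + 1 : ℝ) * derivative (zonalSeries l w) =
      C (w + 2 * l) * ((1 - 2 * X) * derivative (zonalSeries l (w + 1)) +
        C (2 * (w + 1 : ℝ)) * zonalSeries l (w + 1)) := by
  rw [show (1 - 2 * X) * derivative (zonalSeries l (w + 1)) =
    derivative (zonalSeries l (w + 1)) - C 2 * (X * derivative (zonalSeries l (w + 1))) by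
      rw [map_ofNat]; ring]
  ext k
  have hX : (X * derivative (zonalSeries l (w + 1))).coeff k = k * zonalCoeff l (w + 1) k := by
    cases k <;> simp [coeff_derivative, coeff_zonalSeries, mul_comm]
  simp only [coeff_C_mul, coeff_add, coeff_sub, hX, coeff_derivative, coeff_zonalSeries]
  have hpos : (w + 2 * l + k + 1 : ℝ) ≠ 0 := by
    have := w.cast_nonneg (α := ℝ); have := k.cast_nonneg (α := ℝ); linarith
  have hright := zonalCoeff_succ_right hl (w + 1) k
  have hleft := zonalCoeff_succ_left l w (k + 1)
  push_cast at hright hleft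
  apply mul_left_cancel₀ hpos
  linear_combination (-(k + 1 : ℝ)) * hleft - 2 * (w + 2 * l) * hright

lemma zonalSeries_lower {l : ℝ} (hl : -(1 / 2) < l) (w : ℕ) :
    C (w + 1 : ℝ) * zonalSeries l w =
      C (w + 1 : ℝ) * (1 - 2 * X) * zonalSeries l (w + 1) -
        2 * X * (1 - X) * derivative (zonalSeries l (w + 1)) := by
  have hexp : C (w + 1 : ℝ) * (1 - 2 * X) * zonalSeries l (w + 1) -
      2 * X * (1 - X) * derivative (zonalSeries l (w + 1)) =
      C (w + 1 : ℝ) * zonalSeries l (w + 1) - C (2 * (w + 1 : ℝ)) * (X * zonalSeries l (w + 1)) -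
        C 2 * (X * derivative (zonalSeries l (w + 1))) +
        C 2 * (X * (X * derivative (zonalSeries l (w + 1)))) := by
    simp only [map_mul, map_ofNat]; ring
  rw [hexp]
  ext k
  have hleft := zonalCoeff_succ_left l w k
  rcases k with _ | k
  · simp [coeff_zonalSeries, zonalCoeff, poch]
  have hX : (X * derivative (zonalSeries l (w + 1))).coeff k = k * zonalCoeff l (w + 1) k := by
    cases k <;> simp [coeff_derivative, coeff_zonalSeries, mul_comm]
  simp only [coeff_C_mul, coeff_add, coeff_sub, coeff_X_mul, hX, coeff_derivative,
    coeff_zonalSeries]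
  have hpos : (w + 2 * l + k + 1 : ℝ) ≠ 0 := by
    have := w.cast_nonneg (α := ℝ); have := k.cast_nonneg (α := ℝ); linarith
  have hright := zonalCoeff_succ_right hl (w + 1) k
  push_cast at hright hleft
  apply mul_left_cancel₀ hpos
  linear_combination -hleft + 2 * hright

/-- The Gegenbauer polynomial `C_w^l / C_w^l(1)`, normalized to be `1` at `1`. -/
noncomputable def zonal (l : ℝ) (w : ℕ) : ℝ[X] :=
  (zonalSeries l w).comp (C (1 / 2) * (1 - X))

lemma eval_zonal (l : ℝ) (w : ℕ) (x : ℝ) :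
    eval x (zonal l w) = eval (1 / 2 * (1 - x)) (zonalSeries l w) := by
  simp [zonal, eval_comp]

lemma eval_derivative_zonal (l : ℝ) (w : ℕ) (x : ℝ) :
    eval x (derivative (zonal l w)) =
      -(1 / 2) * eval (1 / 2 * (1 - x)) (derivative (zonalSeries l w)) := by
  simp [zonal, derivative_comp, eval_comp]

lemma zonal_zero (l : ℝ) : zonal l 0 = 1 := by
  simp [zonal, zonalSeries, zonalCoeff, poch]

lemma mul_derivative_zonal_pred {l : ℝ} (hl : -(1 / 2) < l) (w : ℕ) :
    C (w : ℝ) * derivative (zonal l (w - 1)) =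
      C (w + 2 * l - 1) * (X * derivative (zonal l w) - C (w : ℝ) * zonal l w) := by
  rcases w with _ | w
  · simp [zonal_zero]
  refine Polynomial.funext fun x => ?_
  have h := congrArg (eval (1 / 2 * (1 - x))) (derivative_zonalSeries_lower hl w)
  simp only [eval_zonal, eval_derivative_zonal, eval_mul, eval_add, eval_sub, eval_C, eval_X,
    eval_one, eval_ofNat, add_tsub_cancel_right, Nat.cast_add, Nat.cast_one] at h ⊢
  linear_combination (-1 / 2) * h

lemma mul_zonal_pred {l : ℝ} (hl : -(1 / 2) < l) (w : ℕ) :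
    C (w : ℝ) * zonal l (w - 1) =
      C (w : ℝ) * X * zonal l w + (1 - X ^ 2) * derivative (zonal l w) := by
  rcases w with _ | w
  · simp [zonal_zero]
  refine Polynomial.funext fun x => ?_
  have h := congrArg (eval (1 / 2 * (1 - x))) (zonalSeries_lower hl w)
  simp only [eval_zonal, eval_derivative_zonal, eval_mul, eval_add, eval_sub, eval_C, eval_X,
    eval_one, eval_ofNat, eval_pow, add_tsub_cancel_right, Nat.cast_add,
    Nat.cast_one] at h ⊢
  linear_combination h

lemma mul_zonal_succ {l : ℝ} (hl : -(1 / 2) < l) (w : ℕ) :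
    C (w + 2 * l) * zonal l (w + 1) =
      C (w + 2 * l) * X * zonal l w - (1 - X ^ 2) * derivative (zonal l w) := by
  have hlow := mul_zonal_pred hl (w + 1)
  have hder := mul_derivative_zonal_pred hl (w + 1)
  have hw : C (w + 1 : ℝ) ≠ 0 := C_ne_zero.mpr w.cast_add_one_ne_zero
  apply mul_left_cancel₀ hw
  simp only [map_add, map_sub, map_mul, map_one, map_ofNat, Nat.cast_add, Nat.cast_one,
    add_tsub_cancel_right] at hlow hder ⊢
  linear_combination (-(C (w : ℝ) + 2 * C l) * X) * hlow + (1 - X ^ 2) * hder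

lemma mul_derivative_zonal_succ {l : ℝ} (hl : -(1 / 2) < l) (w : ℕ) :
    C (w + 2 * l) * derivative (zonal l (w + 1)) =
      C (w + 1 : ℝ) * (X * derivative (zonal l w) + C (w + 2 * l) * zonal l w) := by
  have hlow := mul_zonal_pred hl (w + 1)
  have hder := mul_derivative_zonal_pred hl (w + 1)
  simp only [map_add, map_sub, map_mul, map_one, map_ofNat, Nat.cast_add, Nat.cast_one,
    add_tsub_cancel_right] at hlow hder ⊢
  linear_combination (-(C (w : ℝ) + 2 * C l)) * hlow - X * hder

lemma zonal_ode {l : ℝ} (hl : -(1 / 2) < l) (w : ℕ) :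
    (1 - X ^ 2) * derivative (derivative (zonal l w)) =
      C (2 * l + 1) * X * derivative (zonal l w) - C (w * (w + 2 * l)) * zonal l w := by
  have hlow := congrArg derivative (mul_zonal_pred hl w)
  have hder := mul_derivative_zonal_pred hl w
  simp only [derivative_mul, derivative_C, derivative_X,
    derivative_one, derivative_X_pow, map_add, map_sub, map_mul, map_one, map_ofNat,
    Nat.cast_ofNat] at hlow hder ⊢
  linear_combination hder - hlow

lemma zonalCoeff_succ_succ {l : ℝ} (hl : -(1 / 2) < l) (w k : ℕ) :
    (2 * l + 1) * (k + 1) * zonalCoeff l (w + 1) (k + 1) =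
      -2 * ((w + 1) * (w + 1 + 2 * l)) * zonalCoeff (l + 1) w k := by
  have hl' : 0 < l + 1 / 2 := by linarith
  have h₁ := mul_poch_add_one (-(w + 1 : ℝ)) k
  have h₂ := mul_poch_add_one ((w : ℝ) + 1 + 2 * l) k
  have h₃ := mul_poch_add_one (l + 1 / 2) k
  rw [show -(w + 1 : ℝ) + 1 = -w by ring] at h₁
  rw [show (w : ℝ) + 1 + 2 * l + 1 = w + 2 * (l + 1) by ring] at h₂
  rw [show l + 1 / 2 + 1 = l + 1 + 1 / 2 by ring] at h₃
  have : 0 < poch (l + 1 + 1 / 2) k := poch_pos (by linarith) k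
  simp only [zonalCoeff, poch_succ, Nat.factorial_succ, Nat.cast_add, Nat.cast_mul, Nat.cast_one,
    ← h₁, ← h₂, ← h₃]
  rw [show 2 * l + 1 = 2 * (l + 1 / 2) by ring]
  generalize l + 1 / 2 = b at hl' ⊢
  field_simp

lemma derivative_zonal_succ {l : ℝ} (hl : -(1 / 2) < l) (w : ℕ) :
    C (2 * l + 1) * derivative (zonal l (w + 1)) =
      C ((w + 1) * (w + 1 + 2 * l)) * zonal (l + 1) w := by
  have hseries : C (2 * l + 1) * derivative (zonalSeries l (w + 1)) =
      C (-2 * ((w + 1) * (w + 1 + 2 * l))) * zonalSeries (l + 1) w := by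
    ext k
    simp only [coeff_C_mul, coeff_derivative, coeff_zonalSeries]
    linear_combination zonalCoeff_succ_succ hl w k
  refine Polynomial.funext fun x => ?_
  have h := congrArg (eval (1 / 2 * (1 - x))) hseries
  simp only [eval_zonal, eval_derivative_zonal, eval_mul, eval_C] at h ⊢
  linear_combination (-1 / 2) * h

lemma geg_natCast (l : ℝ) (w : ℕ) (x : ℝ) :
    geg l w x = poch (2 * l) w / w.factorial * eval x (zonal l w) := by
  simp only [geg, Nat.cast_nonneg, not_lt.mpr, if_false, Int.toNat_natCast, eval_zonal, zonalSeries,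
    zonalCoeff, eval_finsetSum, eval_mul, eval_C, eval_pow, eval_X]
  congr! 4
  ring

lemma geg_add_one_sub_one {l : ℝ} (hl : 0 < l) (w : ℕ) (x : ℝ) :
    geg (l + 1) (w - 1) x =
      poch (2 * l) w / (w.factorial * (2 * l)) * eval x (derivative (zonal l w)) := by
  rcases w with _ | w
  · simp [geg, zonal_zero]
  have hder := congrArg (eval x) (derivative_zonal_succ (by linarith : -(1 / 2) < l) w)
  have h₁ := mul_poch_add_one (2 * l) (w + 1)
  have h₂ := mul_poch_add_one (2 * l + 1) w
  have h₃ := poch_succ (2 * l + 1) w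
  simp only [eval_mul, eval_C] at hder
  rw [show (((w + 1 : ℕ) : ℤ) - 1) = w by push_cast; ring, geg_natCast, Nat.factorial_succ,
    show 2 * (l + 1) = 2 * l + 1 + 1 by ring]
  push_cast at h₁ ⊢
  have hl₁ : 2 * l + 1 ≠ 0 := by positivity
  field_simp
  apply mul_left_cancel₀ hl₁
  linear_combination (-poch (2 * l) (w + 1)) * hder + eval x (zonal (l + 1) w) * (w + 1) *
    (2 * l * h₂ - 2 * l * h₃ + h₁)

lemma geg_add_one_sub_two {l : ℝ} (hl : 0 < l) (w : ℕ) (x : ℝ) :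
    geg (l + 1) (w - 2) x = poch (2 * l) w / (w.factorial * (2 * l)) *
      (x * eval x (derivative (zonal l w)) - w * eval x (zonal l w)) := by
  have hlow := congrArg (eval x) (mul_derivative_zonal_pred (by linarith : -(1 / 2) < l) w)
  rcases w with _ | w
  · simp [geg, zonal_zero]
  simp only [eval_mul, eval_C, eval_sub, eval_X, add_tsub_cancel_right] at hlow
  rw [show (((w + 1 : ℕ) : ℤ) - 2) = w - 1 by push_cast; ring, geg_add_one_sub_one hl,
    poch_succ, Nat.factorial_succ]
  push_cast at hlow ⊢
  field_simp
  linear_combination poch (2 * l) w * hlow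

/-! ### The Sturm–Liouville operator and its Heun operator -/

section Operators

variable (p q : ℝ)

/-- The polynomial part of the weight `W_{p,n}`, `n = p + q`. -/
noncomputable def weightPoly : Matrix (Fin 2) (Fin 2) ℝ[X] :=
  !![C p * X ^ 2 + C q, -C (p + q) * X; -C (p + q) * X, C q * X ^ 2 + C p]

/-- The flux matrix `S` of the Sturm–Liouville operator `sturmLiouville`, whose divergence form is
`(E F) W = -(1 - x²)^(1 - n/2) ((1 - x²)^(n/2) F' S)'`. -/
noncomputable def fluxPoly : Matrix (Fin 2) (Fin 2) ℝ[X] :=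
  C (p * q) • weightPoly (p + 1) (q + 1)

/-- The second-order coefficient of `sturmLiouville`: the matrix `A` with `A W = (1 - x²) S`, where
`W` is `weightPoly` and `S` is `fluxPoly`. -/
noncomputable def diffusionPoly : Matrix (Fin 2) (Fin 2) ℝ[X] :=
  !![C (p * (q + 1)) - C (q * (p + 1)) * X ^ 2, C (p - q) * X;
    C (q - p) * X, C (q * (p + 1)) - C (p * (q + 1)) * X ^ 2]

/-- The matrix `Y` for which `(n + 2) Y` is the first-order coefficient of `sturmLiouville`. -/
noncomputable def driftPoly : Matrix (Fin 2) (Fin 2) ℝ[X] :=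
  !![C (q * (p + 1)) * X, C q; C p, C (p * (q + 1)) * X]

/-- The matrix Sturm–Liouville operator `E F = (n + 2) F' Y - F'' A` on rows of polynomials. -/
noncomputable def sturmLiouville : Module.End ℝ (Fin 2 → ℝ[X]) :=
  let D : Module.End ℝ (Fin 2 → ℝ[X]) := derivative.compLeft (Fin 2)
  (p + q + 2) • (driftPoly p q).vecMulLinear.restrictScalars ℝ * D -
    (diffusionPoly p q).vecMulLinear.restrictScalars ℝ * D * D

lemma sturmLiouville_apply (F : Fin 2 → ℝ[X]) : sturmLiouville p q F =
    (p + q + 2) • (derivative ∘ F) ᵥ* driftPoly p q -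
      (derivative ∘ derivative ∘ F) ᵥ* diffusionPoly p q :=
  rfl

/-- The algebraic Heun operator `T = (α - x) E + E (α - x) + (2 N (N + n + 2) + n + 2) Y`; the
coefficient of `Y` makes `T` preserve the rows spanned by `P_0, …, P_N`. -/
noncomputable def heun (α N : ℝ) : Module.End ℝ (Fin 2 → ℝ[X]) :=
  let a : Module.End ℝ (Fin 2 → ℝ[X]) := Algebra.lsmul ℝ ℝ _ (C α - X)
  a * sturmLiouville p q + sturmLiouville p q * a +
    (2 * N * (N + p + q + 2) + p + q + 2) • (driftPoly p q).vecMulLinear.restrictScalars ℝ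

lemma heun_apply (α N : ℝ) (F : Fin 2 → ℝ[X]) : heun p q α N F =
    (C α - X) • sturmLiouville p q F + sturmLiouville p q ((C α - X) • F) +
      (2 * N * (N + p + q + 2) + p + q + 2) • F ᵥ* driftPoly p q :=
  rfl

/-- The Pearson operator `g ↦ (1 - x²)^(1 - n/2) ((1 - x²)^(n/2) g)'`. -/
noncomputable def pearson (n : ℝ) (g : ℝ[X]) : ℝ[X] :=
  (1 - X ^ 2) * derivative g - C n * X * g

/-- The bilinear concomitant `F' S Gᵀ - F S G'ᵀ` of the Sturm–Liouville operator. -/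
noncomputable def concomitant (F G : Fin 2 → ℝ[X]) : ℝ[X] :=
  (derivative ∘ F) ᵥ* fluxPoly p q ⬝ᵥ G - F ᵥ* fluxPoly p q ⬝ᵥ (derivative ∘ G)

theorem sturmLiouville_lagrange (F G : Fin 2 → ℝ[X]) :
    sturmLiouville p q F ᵥ* weightPoly p q ⬝ᵥ G - F ᵥ* weightPoly p q ⬝ᵥ sturmLiouville p q G =
      -pearson (p + q) (concomitant p q F G) := by
  simp only [sturmLiouville_apply, pearson, concomitant, fluxPoly, weightPoly, driftPoly,
    diffusionPoly, dotProduct, vecMul_eq_sum, Fin.sum_univ_two, Fin.isValue, Function.comp_apply,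
    map_mul, map_add, map_one, smul_add, map_sub, Pi.sub_apply, Pi.add_apply, Pi.smul_apply,
    of_apply, cons_val', cons_val_zero, cons_val_fin_one, smul_eq_mul, smul_eq_C_mul, map_ofNat C,
    cons_val_one, neg_add_rev, smul_of, smul_cons, smul_empty,
    derivative_mul, derivative_C, zero_mul, mul_zero, add_zero, derivative_one,
    derivative_X_pow_succ, Nat.cast_one, pow_one, zero_add, derivative_neg, neg_zero, derivative_X,
    mul_one, neg_sub]
  ring

theorem heun_lagrange (α N : ℝ) (F G : Fin 2 → ℝ[X]) :
    heun p q α N F ᵥ* weightPoly p q ⬝ᵥ G - F ᵥ* weightPoly p q ⬝ᵥ heun p q α N G =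
      -pearson (p + q) (2 * (C α - X) * concomitant p q F G) := by
  have h₁ := sturmLiouville_lagrange p q F ((C α - X) • G)
  have h₂ := sturmLiouville_lagrange p q ((C α - X) • F) G
  have hY : F ᵥ* driftPoly p q ᵥ* weightPoly p q ⬝ᵥ G =
      F ᵥ* weightPoly p q ⬝ᵥ (G ᵥ* driftPoly p q) := by
    simp only [weightPoly, driftPoly, dotProduct, vecMul_eq_sum, Fin.sum_univ_two, Fin.isValue,
      map_mul, map_add, map_one, Pi.add_apply, Pi.smul_apply, of_apply, cons_val', cons_val_zero,
      cons_val_fin_one, smul_eq_mul, cons_val_one, neg_add_rev]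
    ring
  have hc : concomitant p q F ((C α - X) • G) + concomitant p q ((C α - X) • F) G =
      2 * (C α - X) * concomitant p q F G := by
    simp only [concomitant, fluxPoly, weightPoly, dotProduct, vecMul_eq_sum, Fin.sum_univ_two,
      Fin.isValue, Function.comp_apply, map_mul, map_add, map_one, neg_add_rev, smul_of, smul_cons,
      smul_eq_mul, smul_empty, Pi.add_apply, Pi.smul_apply, of_apply, cons_val', cons_val_zero,
      cons_val_fin_one, cons_val_one, derivative_mul]
    ring
  have hadd (f g : ℝ[X]) :
      pearson (p + q) (f + g) = pearson (p + q) f + pearson (p + q) g := by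
    simp only [pearson, map_add]; ring
  rw [← hc, hadd]
  simp only [heun_apply, add_vecMul, smul_vecMul, add_dotProduct, dotProduct_add, smul_dotProduct,
    dotProduct_smul, smul_eq_mul, hY] at h₁ h₂ ⊢
  linear_combination h₁ + h₂

end Operators

/-! ### Integration over `[-1, α]` -/

lemma intervalIntegrable_one_sub_sq_rpow {s α : ℝ} (hs : -1 < s) (hα : α ∈ Set.Ioo (-1 : ℝ) 1) :
    IntervalIntegrable (fun x : ℝ => (1 - x ^ 2) ^ s) volume (-1) α := by
  have hleft : IntervalIntegrable (fun x : ℝ => (x + 1) ^ s) volume (-1) α := by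
    simpa using
      (intervalIntegral.intervalIntegrable_rpow' (a := 0) (b := α + 1) hs).comp_add_right 1
  have hright : ContinuousOn (fun x : ℝ => (1 - x) ^ s) (Set.uIcc (-1) α) := by
    rw [Set.uIcc_of_le hα.1.le]
    exact ContinuousOn.rpow_const (by fun_prop) fun x hx =>
      Or.inl (by linarith [hx.2, hα.2] : 0 < 1 - x).ne'
  refine (hleft.mul_continuousOn hright).congr fun x hx => ?_
  rw [Set.uIoc_of_le hα.1.le] at hx
  rw [show 1 - x ^ 2 = (x + 1) * (1 - x) by ring,
    Real.mul_rpow (by linarith [hx.1]) (by linarith [hx.2, hα.2])]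

lemma intervalIntegrable_one_sub_sq_rpow_mul_eval {s α : ℝ} (hs : -1 < s)
    (hα : α ∈ Set.Ioo (-1 : ℝ) 1) (f : ℝ[X]) :
    IntervalIntegrable (fun x : ℝ => (1 - x ^ 2) ^ s * f.eval x) volume (-1) α :=
  (intervalIntegrable_one_sub_sq_rpow hs hα).mul_continuousOn f.continuous.continuousOn

/-- The functional `f ↦ ∫_{-1}^α (1 - x²)^s f(x) dx` on polynomials. -/
noncomputable def truncatedIntegral {s α : ℝ} (hs : -1 < s) (hα : α ∈ Set.Ioo (-1 : ℝ) 1) :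
    ℝ[X] →ₗ[ℝ] ℝ where
  toFun f := ∫ x in (-1 : ℝ)..α, (1 - x ^ 2) ^ s * f.eval x
  map_add' f g := by
    simp only [eval_add, mul_add]
    exact intervalIntegral.integral_add (intervalIntegrable_one_sub_sq_rpow_mul_eval hs hα f)
      (intervalIntegrable_one_sub_sq_rpow_mul_eval hs hα g)
  map_smul' c f := by
    simp only [eval_smul, mul_smul_comm]
    exact intervalIntegral.integral_smul c _

lemma hasDerivAt_one_sub_sq_rpow_mul_eval (n : ℝ) (g : ℝ[X]) {x : ℝ} (hx : 0 < 1 - x ^ 2) :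
    HasDerivAt (fun x : ℝ => (1 - x ^ 2) ^ (n / 2) * g.eval x)
      ((1 - x ^ 2) ^ (n / 2 - 1) * (pearson n g).eval x) x := by
  have hsq : HasDerivAt (fun x : ℝ => 1 - x ^ 2) (-(2 * x)) x := by
    simpa using (hasDerivAt_pow 2 x).const_sub 1
  refine ((hsq.rpow_const (p := n / 2) (Or.inl hx.ne')).mul (g.hasDerivAt x)).congr_deriv ?_
  have hsplit : (1 - x ^ 2) ^ (n / 2) = (1 - x ^ 2) ^ (n / 2 - 1) * (1 - x ^ 2) := by
    rw [Real.rpow_sub_one hx.ne', div_mul_cancel₀ _ hx.ne']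
  simp only [pearson, eval_sub, eval_mul, eval_one, eval_pow, eval_X, eval_C, hsplit]
  ring

theorem truncatedIntegral_pearson {n α : ℝ} (hn : 0 < n) (hα : α ∈ Set.Ioo (-1 : ℝ) 1)
    (g : ℝ[X]) :
    truncatedIntegral (s := n / 2 - 1) (by linarith) hα (pearson n g) =
      (1 - α ^ 2) ^ (n / 2) * g.eval α := by
  have hcont : ContinuousOn (fun x : ℝ => (1 - x ^ 2) ^ (n / 2) * g.eval x) (Set.Icc (-1) α) :=
    (ContinuousOn.rpow_const (by fun_prop) fun x _ => Or.inr (by positivity)).mul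
      g.continuous.continuousOn
  have hderiv (x : ℝ) (hx : x ∈ Set.Ioo (-1) α) :=
    hasDerivAt_one_sub_sq_rpow_mul_eval n g
      (by nlinarith [hx.1, hx.2.trans hα.2] : 0 < 1 - x ^ 2)
  have hint := intervalIntegrable_one_sub_sq_rpow_mul_eval (s := n / 2 - 1) (by linarith) hα
    (pearson n g)
  have hzero : (1 - (-1 : ℝ) ^ 2) ^ (n / 2) = 0 := by
    rw [neg_one_sq, sub_self, Real.zero_rpow (by positivity)]
  change ∫ x in (-1 : ℝ)..α, (1 - x ^ 2) ^ (n / 2 - 1) * (pearson n g).eval x = _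
  rw [intervalIntegral.integral_eq_sub_of_hasDerivAt_of_le hα.1.le hcont hderiv hint, hzero,
    zero_mul, sub_zero]

/-- The bilinear form `(F, G) ↦ ∫_{-1}^α F W_{p,n} Gᵀ dx`, `n = p + q`, on rows of polynomials. -/
noncomputable def truncatedForm {p q α : ℝ} (hn : 0 < p + q) (hα : α ∈ Set.Ioo (-1 : ℝ) 1) :
    LinearMap.BilinForm ℝ (Fin 2 → ℝ[X]) :=
  LinearMap.mk₂ ℝ
    (fun F G => truncatedIntegral (s := (p + q) / 2 - 1) (by linarith) hα
      (F ᵥ* weightPoly p q ⬝ᵥ G))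
    (fun F F' G => by rw [add_vecMul, add_dotProduct, map_add])
    (fun c F G => by rw [smul_vecMul, smul_dotProduct, map_smul])
    (fun F G G' => by rw [dotProduct_add, map_add])
    (fun c F G => by rw [dotProduct_smul, map_smul])

theorem heun_isSelfAdjoint {p q α : ℝ} (hn : 0 < p + q) (hα : α ∈ Set.Ioo (-1 : ℝ) 1) (N : ℝ) :
    (truncatedForm hn hα).IsSelfAdjoint (heun p q α N) := fun F G => by
  have h := congrArg (truncatedIntegral (s := (p + q) / 2 - 1) (by linarith) hα)
    (heun_lagrange p q α N F G)
  rw [map_sub, map_neg, truncatedIntegral_pearson hn hα] at h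
  simp only [eval_mul, eval_sub, eval_C, eval_X, sub_self, mul_zero, zero_mul, neg_zero] at h
  exact sub_eq_zero.mp h

theorem commute_gram_of_isSelfAdjoint {R V ι : Type*} [CommRing R] [AddCommGroup V] [Module R V]
    [Fintype ι] {B : LinearMap.BilinForm R V} {D : Module.End R V} (hD : B.IsSelfAdjoint D)
    {φ : ι → V} {L : Matrix ι ι R} (hL : L.IsSymm) (hφ : ∀ r, D (φ r) = ∑ s, L r s • φ s) :
    Commute L (Matrix.of fun r s => B (φ r) (φ s)) := by
  ext r s
  calc ∑ t, L r t * B (φ t) (φ s) = B (D (φ r)) (φ s) := by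
        simp only [hφ, map_sum, map_smul, LinearMap.sum_apply, LinearMap.smul_apply, smul_eq_mul]
    _ = B (φ r) (D (φ s)) := hD (φ r) (φ s)
    _ = ∑ t, B (φ r) (φ t) * L t s := by
        simp only [hφ, map_sum, map_smul, smul_eq_mul, hL.apply, mul_comm]

/-! ### The rows of `Q_w` -/

/-- The row `(p G + x G', G')` with `G` the normalized Gegenbauer polynomial of degree `w` and
parameter `(p + q + 1) / 2`: up to a factor, the first row of `P_w`. The second row is the reversal
of `zonalRow q p w`. -/
noncomputable def zonalRow (p q : ℝ) (w : ℕ) : Fin 2 → ℝ[X] :=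
  ![C p * zonal ((p + q + 1) / 2) w + X * derivative (zonal ((p + q + 1) / 2) w),
    derivative (zonal ((p + q + 1) / 2) w)]

lemma zonalRow_comp_rev (p q : ℝ) (w : ℕ) :
    zonalRow q p w ∘ Fin.rev = ![derivative (zonal ((p + q + 1) / 2) w),
      C q * zonal ((p + q + 1) / 2) w + X * derivative (zonal ((p + q + 1) / 2) w)] := by
  funext i
  fin_cases i <;> simp [zonalRow, add_comm q p]

theorem sturmLiouville_zonalRow {p q : ℝ} (h : -2 < p + q) (w : ℕ) :
    sturmLiouville p q (zonalRow p q w) =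
      (q * (p + 1) * (w * (w + p + q + 1))) • zonalRow p q w := by
  have hode := zonal_ode (l := (p + q + 1) / 2) (by linarith) w
  have hode' := congrArg derivative hode
  rw [show 2 * ((p + q + 1) / 2) + 1 = p + q + 2 by ring,
    show (w + 2 * ((p + q + 1) / 2) : ℝ) = w + p + q + 1 by ring] at hode hode'
  simp only [derivative_mul, derivative_C, derivative_X, derivative_one, derivative_X_pow,
    map_add, map_sub, map_mul, map_one, map_ofNat, map_natCast, Nat.cast_ofNat,
    derivative_ofNat, derivative_natCast] at hode hode'
  funext i
  rw [sturmLiouville_apply]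
  generalize hG : zonal ((p + q + 1) / 2) w = G at hode hode'
  fin_cases i <;>
    simp only [zonalRow, hG, driftPoly, map_mul, map_add, map_one, vecMul_eq_sum,
      Function.comp_apply, Fin.sum_univ_two, Fin.isValue, cons_val_zero,
      derivative_mul, derivative_C, zero_mul, zero_add, derivative_X, one_mul, cons_val_one,
      cons_val_fin_one, smul_add, diffusionPoly, map_sub, Fin.zero_eta, Fin.mk_one, Pi.sub_apply,
      Pi.add_apply, Pi.smul_apply, of_apply, cons_val', smul_eq_mul, smul_eq_C_mul, map_ofNat C,
      map_natCast]
  · linear_combination -C q * (C p + 1) * (C p * hode + X * hode')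
  · linear_combination -C q * (C p + 1) * hode'

lemma zonalRow_vecMul_driftPoly (p q : ℝ) (w : ℕ) :
    zonalRow p q w ᵥ* driftPoly p q =
      (q * (p + 1)) • (X : ℝ[X]) • zonalRow p q w + p • (zonalRow q p w ∘ Fin.rev) := by
  rw [zonalRow_comp_rev]
  funext i
  fin_cases i <;>
  · simp only [zonalRow, driftPoly, map_mul, map_add, map_one, Fin.zero_eta, Fin.mk_one,
    Fin.isValue, vecMul_eq_sum, Finset.sum_apply, Pi.smul_apply, of_apply, cons_val', cons_val_zero,
    cons_val_fin_one, smul_eq_mul, Fin.sum_univ_two, cons_val_one, smul_cons, smul_empty,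
    smul_eq_C_mul, Nat.succ_eq_add_one, Nat.reduceAdd, smul_add, Pi.add_apply]
    ring

theorem X_smul_zonalRow {p q : ℝ} (hp : 0 < p) (hq : 0 < q) (w : ℕ) :
    (X : ℝ[X]) • zonalRow p q w =
      ((p + q + w + 1) * (p + w) / ((p + q + 2 * w + 1) * (p + w + 1))) • zonalRow p q (w + 1) -
      (p / ((p + w + 1) * (q + w))) • (zonalRow q p w ∘ Fin.rev) +
      (w * (q + w + 1) / ((p + q + 2 * w + 1) * (q + w))) • zonalRow p q (w - 1) := by
  have hl : -(1 / 2) < (p + q + 1) / 2 := by linarith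
  have hsucc := mul_zonal_succ hl w
  have hsucc' := mul_derivative_zonal_succ hl w
  have hpred := mul_zonal_pred hl w
  have hpred' := mul_derivative_zonal_pred hl w
  rw [zonalRow_comp_rev]
  simp only [zonalRow]
  generalize zonal ((p + q + 1) / 2) w = G, zonal ((p + q + 1) / 2) (w + 1) = G₁,
    zonal ((p + q + 1) / 2) (w - 1) = G₀ at *
  funext i
  refine Polynomial.funext fun x => ?_
  replace hsucc := congrArg (eval x) hsucc
  replace hsucc' := congrArg (eval x) hsucc'
  replace hpred := congrArg (eval x) hpred
  replace hpred' := congrArg (eval x) hpred'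
  simp only [eval_mul, eval_add, eval_sub, eval_C, eval_X, eval_one, eval_pow] at *
  fin_cases i <;>
    simp only [Fin.zero_eta, Fin.mk_one, Fin.isValue, Pi.smul_apply, cons_val_zero, cons_val_one,
      cons_val_fin_one, smul_eq_mul, eval_mul, eval_X, eval_add, eval_C, smul_cons, smul_add,
      smul_empty, Nat.succ_eq_add_one, Nat.reduceAdd, sub_cons, head_cons, tail_cons, sub_self,
      zero_empty, Pi.add_apply, eval_sub, eval_smul]
  · linear_combination (norm := (field_simp; ring))
      (-(p + w) / ((p + q + 2 * w + 1) * (p + w + 1))) * (p * hsucc + x * hsucc') -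
        ((q + w + 1) / ((p + q + 2 * w + 1) * (q + w))) * (p * hpred + x * hpred')
  · linear_combination (norm := (field_simp; ring))
      (-(p + w) / ((p + q + 2 * w + 1) * (p + w + 1))) * hsucc' -
        ((q + w + 1) / ((p + q + 2 * w + 1) * (q + w))) * hpred'

lemma sqrt_mul_sqrt_eq {a b c d : ℝ} (ha : 0 ≤ a) (hc : 0 ≤ c) (h : a * b = c ^ 2 * d) :
    √a * √b = c * √d := by
  rw [← Real.sqrt_mul ha, h, Real.sqrt_mul (sq_nonneg c), Real.sqrt_sq hc]

/-- Up to a factor independent of `w`, the factor that turns `zonalRow p q w` into the first row of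
the orthonormal polynomial `Q_w`. -/
noncomputable def rowScale (p q : ℝ) (w : ℕ) : ℝ :=
  √((p + q + 2 * w + 1) * poch (p + q + 1) w / (w.factorial * (p * (p + w) * (q + w + 1))))

/-- The coefficient of the first row of `Q_w` in `x` times the first row of `Q_{w-1}`. -/
noncomputable def stepCoeff (p q : ℝ) (w : ℕ) : ℝ :=
  √(w * (p + w - 1) * (q + w + 1) * (p + q + w) /
    ((p + q + 2 * w - 1) * (p + q + 2 * w + 1) * (p + w) * (q + w)))

/-- Up to sign, the coefficient of the second row of `Q_w` in `x` times its first row. -/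
noncomputable def couplingCoeff (p q : ℝ) (w : ℕ) : ℝ :=
  √(p * q / ((p + w) * (p + w + 1) * (q + w) * (q + w + 1)))

lemma couplingCoeff_comm (p q : ℝ) (w : ℕ) : couplingCoeff p q w = couplingCoeff q p w := by
  unfold couplingCoeff
  congr 1
  ring

section Normalization

variable {p q : ℝ} (hp : 0 < p) (hq : 0 < q) (w : ℕ)

include hp hq

lemma stepCoeff_succ_mul_rowScale_succ : stepCoeff p q (w + 1) * rowScale p q (w + 1) =
    (p + q + w + 1) * (p + w) / ((p + q + 2 * w + 1) * (p + w + 1)) * rowScale p q w := by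
  refine sqrt_mul_sqrt_eq ?_ (by positivity) ?_
  · push_cast
    rw [show p + ((w : ℝ) + 1) - 1 = p + w by ring,
      show p + q + 2 * ((w : ℝ) + 1) - 1 = p + q + 2 * w + 1 by ring]
    positivity
  · rw [poch_succ, Nat.factorial_succ]
    push_cast
    rw [show p + ((w : ℝ) + 1) - 1 = p + w by ring,
      show p + q + 2 * ((w : ℝ) + 1) - 1 = p + q + 2 * w + 1 by ring]
    field_simp
    ring

lemma stepCoeff_succ_mul_rowScale : stepCoeff p q (w + 1) * rowScale p q w =
    (w + 1) * (q + w + 2) / ((p + q + 2 * w + 3) * (q + w + 1)) * rowScale p q (w + 1) := by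
  refine sqrt_mul_sqrt_eq ?_ (by positivity) ?_
  · push_cast
    rw [show p + ((w : ℝ) + 1) - 1 = p + w by ring,
      show p + q + 2 * ((w : ℝ) + 1) - 1 = p + q + 2 * w + 1 by ring]
    positivity
  · rw [poch_succ, Nat.factorial_succ]
    push_cast
    rw [show p + ((w : ℝ) + 1) - 1 = p + w by ring,
      show p + q + 2 * ((w : ℝ) + 1) - 1 = p + q + 2 * w + 1 by ring]
    field_simp
    ring

lemma couplingCoeff_mul_rowScale : couplingCoeff p q w * rowScale q p w =
    p / ((p + w + 1) * (q + w)) * rowScale p q w := by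
  refine sqrt_mul_sqrt_eq (by positivity) (by positivity) ?_
  rw [add_comm q p]
  field_simp

end Normalization

/-- The first row of `Q_w`, up to a factor independent of `w`; the second row is
`normalizedRow q p w ∘ Fin.rev` up to the same factor. -/
noncomputable def normalizedRow (p q : ℝ) (w : ℕ) : Fin 2 → ℝ[X] :=
  rowScale p q w • zonalRow p q w

lemma normalizedRow_comp_rev (p q : ℝ) (w : ℕ) :
    normalizedRow p q w ∘ Fin.rev = rowScale p q w • (zonalRow p q w ∘ Fin.rev) :=
  rfl

section

variable {p q : ℝ} (hp : 0 < p) (hq : 0 < q) (w : ℕ)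

include hp hq

theorem X_smul_normalizedRow : (X : ℝ[X]) • normalizedRow p q w =
    stepCoeff p q (w + 1) • normalizedRow p q (w + 1) -
      couplingCoeff p q w • (normalizedRow q p w ∘ Fin.rev) +
      stepCoeff p q w • normalizedRow p q (w - 1) := by
  have hdown : (w * (q + w + 1) / ((p + q + 2 * w + 1) * (q + w))) * rowScale p q w =
      stepCoeff p q w * rowScale p q (w - 1) := by
    cases w with
    | zero => simp [stepCoeff]
    | succ w =>
      rw [Nat.add_sub_cancel, stepCoeff_succ_mul_rowScale hp hq]
      push_cast
      ring
  rw [normalizedRow_comp_rev]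
  simp only [normalizedRow, smul_smul]
  rw [stepCoeff_succ_mul_rowScale_succ hp hq, couplingCoeff_mul_rowScale hp hq, ← hdown,
    smul_comm, X_smul_zonalRow hp hq]
  module

theorem normalizedRow_vecMul_driftPoly : normalizedRow p q w ᵥ* driftPoly p q =
    (q * (p + 1)) • (X : ℝ[X]) • normalizedRow p q w +
      ((p + w + 1) * (q + w) * couplingCoeff p q w) • (normalizedRow q p w ∘ Fin.rev) := by
  have hcoupling : (p + w + 1) * (q + w) * couplingCoeff p q w * rowScale q p w =
      rowScale p q w * p := by
    rw [mul_assoc, couplingCoeff_mul_rowScale hp hq]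
    field_simp
  rw [normalizedRow_comp_rev, smul_smul, hcoupling, normalizedRow, smul_vecMul,
    zonalRow_vecMul_driftPoly]
  module

theorem sturmLiouville_normalizedRow : sturmLiouville p q (normalizedRow p q w) =
    (q * (p + 1) * (w * (w + p + q + 1))) • normalizedRow p q w := by
  rw [normalizedRow, map_smul, sturmLiouville_zonalRow (by linarith), smul_comm]

end

lemma driftPoly_comp_rev (p q : ℝ) (F : Fin 2 → ℝ[X]) :
    (F ∘ Fin.rev) ᵥ* driftPoly p q = (F ᵥ* driftPoly q p) ∘ Fin.rev := by
  funext i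
  fin_cases i <;> simp [driftPoly, vecMul_eq_sum, add_comm]

theorem sturmLiouville_comp_rev (p q : ℝ) (F : Fin 2 → ℝ[X]) :
    sturmLiouville p q (F ∘ Fin.rev) = sturmLiouville q p F ∘ Fin.rev := by
  have hdiff (G : Fin 2 → ℝ[X]) :
      (G ∘ Fin.rev) ᵥ* diffusionPoly p q = (G ᵥ* diffusionPoly q p) ∘ Fin.rev := by
    funext i
    fin_cases i <;> simp [diffusionPoly, vecMul_eq_sum, add_comm]
  simp only [sturmLiouville_apply, ← Function.comp_assoc, driftPoly_comp_rev, hdiff, add_comm p q]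
  rfl

theorem heun_comp_rev (p q α N : ℝ) (F : Fin 2 → ℝ[X]) :
    heun p q α N (F ∘ Fin.rev) = heun q p α N F ∘ Fin.rev := by
  have hsmul (a : ℝ[X]) (G : Fin 2 → ℝ[X]) : a • (G ∘ Fin.rev) = (a • G) ∘ Fin.rev := rfl
  simp only [heun_apply, hsmul, sturmLiouville_comp_rev, driftPoly_comp_rev,
    show 2 * N * (N + p + q + 2) + p + q + 2 = 2 * N * (N + q + p + 2) + q + p + 2 by ring]
  rfl

lemma stepCoeff_zero (p q : ℝ) : stepCoeff p q 0 = 0 := by simp [stepCoeff]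

lemma stepCoeff_smul_sturmLiouville_normalizedRow_pred {p q : ℝ} (hp : 0 < p) (hq : 0 < q)
    (w : ℕ) : stepCoeff p q w • sturmLiouville p q (normalizedRow p q (w - 1)) =
      (q * (p + 1) * ((w - 1) * (w + p + q)) * stepCoeff p q w) • normalizedRow p q (w - 1) := by
  cases w with
  | zero => simp only [stepCoeff_zero, zero_smul, mul_zero]
  | succ w =>
    rw [Nat.add_sub_cancel, sturmLiouville_normalizedRow hp hq]
    push_cast
    module

theorem heun_normalizedRow {p q : ℝ} (hp : 0 < p) (hq : 0 < q) (α N : ℝ) (w : ℕ) :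
    heun p q α N (normalizedRow p q w) =
      (2 * α * (q * (p + 1)) * (w * (w + p + q + 1))) • normalizedRow p q w +
      (2 * (w * (w + p + q + 1)) * ((N + p + 1) * (N + q + 1)) * couplingCoeff p q w) •
        (normalizedRow q p w ∘ Fin.rev) +
      (2 * (q * (p + 1)) * ((N - w) * (N + p + q + w + 2)) * stepCoeff p q (w + 1)) •
        normalizedRow p q (w + 1) +
      (2 * (q * (p + 1)) * ((N - w + 1) * (N + p + q + w + 1)) * stepCoeff p q w) •
        normalizedRow p q (w - 1) := by
  have hrev : sturmLiouville p q (normalizedRow q p w ∘ Fin.rev) =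
      (p * (q + 1) * (w * (w + p + q + 1))) • (normalizedRow q p w ∘ Fin.rev) := by
    rw [sturmLiouville_comp_rev, sturmLiouville_normalizedRow hq hp, add_right_comm (w : ℝ) q p]
    rfl
  have hsub (F : Fin 2 → ℝ[X]) : (C α - X) • F = α • F - (X : ℝ[X]) • F := by
    rw [sub_smul, ← algebraMap_eq, algebraMap_smul]
  rw [heun_apply, sturmLiouville_normalizedRow hp hq, normalizedRow_vecMul_driftPoly hp hq, hsub,
    hsub, smul_comm X, X_smul_normalizedRow hp hq, map_sub, map_smul, map_add, map_sub, map_smul,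
    map_smul, map_smul, stepCoeff_smul_sturmLiouville_normalizedRow_pred hp hq, hrev,
    sturmLiouville_normalizedRow hp hq, sturmLiouville_normalizedRow hp hq]
  push_cast
  module

/-! ### The matrix `L_3` -/

/-- The rows of `Q_0, Q_1, …` in succession, up to a common factor. -/
noncomputable def orthoRow (p q : ℝ) (r : ℕ) : Fin 2 → ℝ[X] :=
  if r % 2 = 0 then normalizedRow p q (r / 2) else normalizedRow q p (r / 2) ∘ Fin.rev

lemma orthoRow_two_mul (p q : ℝ) (w : ℕ) : orthoRow p q (2 * w) = normalizedRow p q w := by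
  rw [orthoRow, if_pos (by omega), Nat.mul_div_cancel_left w two_pos]

lemma orthoRow_two_mul_add_one (p q : ℝ) (w : ℕ) :
    orthoRow p q (2 * w + 1) = normalizedRow q p w ∘ Fin.rev := by
  rw [orthoRow, if_neg (by omega), show (2 * w + 1) / 2 = w by omega]

lemma sum_ite_val_eq_smul {R M : Type*} [Semiring R] [AddCommMonoid M] [Module R M]
    {m t : ℕ} {a : R} (h : m ≤ t → a = 0) (f : ℕ → M) :
    ∑ j : Fin m, (if j.val = t then a else 0) • f j = a • f t := by
  by_cases ht : t < m
  · rw [Finset.sum_eq_single ⟨t, ht⟩ (fun j _ hj => by rw [if_neg (by grind), zero_smul]) (by simp)]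
    rw [if_pos rfl]
  · simp [h (not_lt.mp ht)]

/-- The factor relating the matrix of the Heun operator in the basis `orthoRow` to `L_3`. -/
noncomputable def heunScale (n : ℕ) (p α : ℝ) : ℝ :=
  2 * α * (n + 2) * ((n - p) * (p + 1))

section Entries

variable (n : ℕ) (p α : ℝ) (N : ℕ)

lemma L3_isSymm : (L3 n p α N).IsSymm := by
  ext i j
  simp only [transpose_apply, L3, of_apply]
  grind

lemma L3e_zero : L3e n p α N 0 = 0 := by simp [L3e]

lemma L3f_zero : L3f n p α N 0 = 0 := by simp [L3f]

lemma L3e_add_one : L3e n p α N (N + 1) = 0 := by simp [L3e]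

lemma L3f_add_one : L3f n p α N (N + 1) = 0 := by simp [L3f]

variable {N}

lemma L3_apply_of_even {i : Fin (2 * (N + 1))} {w : ℕ} (hi : i.val = 2 * w)
    (j : Fin (2 * (N + 1))) : L3 n p α N i j =
      (if j.val = 2 * w then L3dO n (w + 1) else 0) +
      (if j.val = 2 * w + 1 then L3b n p α N (w + 1) else 0) +
      (if j.val = 2 * (w + 1) then L3e n p α N (w + 1) else 0) +
      (if j.val = 2 * (w - 1) then L3e n p α N w else 0) := by
  have := L3e_zero n p α N
  simp only [L3, of_apply]
  grind

lemma L3_apply_of_odd {i : Fin (2 * (N + 1))} {w : ℕ} (hi : i.val = 2 * w + 1)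
    (j : Fin (2 * (N + 1))) : L3 n p α N i j =
      (if j.val = 2 * w + 1 then L3dE n p (w + 1) else 0) +
      (if j.val = 2 * w then L3b n p α N (w + 1) else 0) +
      (if j.val = 2 * (w + 1) + 1 then L3f n p α N (w + 1) else 0) +
      (if j.val = 2 * (w - 1) + 1 then L3f n p α N w else 0) := by
  have := L3f_zero n p α N
  simp only [L3, of_apply]
  simp only [hi, show (2 * w + 1 + 1) % 2 = 0 by omega]
  grind

variable {M : Type*} [AddCommMonoid M] [Module ℝ M] (f : ℕ → M) {i : Fin (2 * (N + 1))} {w : ℕ}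

lemma sum_L3_smul_of_even (hi : i.val = 2 * w) :
    ∑ j, L3 n p α N i j • f j = L3dO n (w + 1) • f (2 * w) + L3b n p α N (w + 1) • f (2 * w + 1) +
      L3e n p α N (w + 1) • f (2 * (w + 1)) + L3e n p α N w • f (2 * (w - 1)) := by
  have hend : 2 * (N + 1) ≤ 2 * (w + 1) → L3e n p α N (w + 1) = 0 := fun h => by
    rw [show w = N by omega, L3e_add_one]
  simp only [L3_apply_of_even n p α hi, add_smul, Finset.sum_add_distrib]
  rw [sum_ite_val_eq_smul (by omega), sum_ite_val_eq_smul (by omega), sum_ite_val_eq_smul hend,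
    sum_ite_val_eq_smul (by omega)]

lemma sum_L3_smul_of_odd (hi : i.val = 2 * w + 1) :
    ∑ j, L3 n p α N i j • f j = L3dE n p (w + 1) • f (2 * w + 1) + L3b n p α N (w + 1) • f (2 * w) +
      L3f n p α N (w + 1) • f (2 * (w + 1) + 1) + L3f n p α N w • f (2 * (w - 1) + 1) := by
  have hend : 2 * (N + 1) ≤ 2 * (w + 1) + 1 → L3f n p α N (w + 1) = 0 := fun h => by
    rw [show w = N by omega, L3f_add_one]
  simp only [L3_apply_of_odd n p α hi, add_smul, Finset.sum_add_distrib]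
  rw [sum_ite_val_eq_smul (by omega), sum_ite_val_eq_smul (by omega), sum_ite_val_eq_smul hend,
    sum_ite_val_eq_smul (by omega)]

end Entries

section Scale

variable {n : ℕ} {p α : ℝ} (N k : ℕ)

lemma heunScale_mul_L3dO (w : ℕ) : heunScale n p α * L3dO n (w + 1) =
    2 * α * ((n - p) * (p + 1)) * (w * (w + n + 1)) := by
  rw [heunScale, L3dO]
  push_cast
  field_simp
  ring

lemma heunScale_mul_L3e (hα0 : α ≠ 0) : heunScale n p α * L3e n p α N k =
    2 * ((n - p) * (p + 1)) * ((N - k + 1) * (N + n + k + 1)) * stepCoeff p (n - p) k := by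
  have hroot : stepCoeff p (n - p) k = √((k : ℝ) * (p + k - 1) * ((n : ℝ) - p + 1 + k) * (n + k) /
      (((n : ℝ) + 2 * k - 1) * (n + 2 * k + 1) * (p + k) * (n - p + k))) := by
    unfold stepCoeff
    congr 2 <;> ring
  rw [heunScale, L3e, hroot]
  field_simp

variable (hp : 0 < p)

include hp

lemma heunScale_mul_L3dE (hpn : p < n) (w : ℕ) : heunScale n p α * L3dE n p (w + 1) =
    2 * α * (p * (n - p + 1)) * (w * (w + n + 1)) := by
  have : 0 < n - p := sub_pos.mpr hpn
  rw [heunScale, L3dE]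
  push_cast
  field_simp
  ring

lemma heunScale_mul_L3f (hpn : p < n) (hα0 : α ≠ 0) : heunScale n p α * L3f n p α N k =
    2 * (p * (n - p + 1)) * ((N - k + 1) * (N + n + k + 1)) * stepCoeff (n - p) p k := by
  have : 0 < n - p := sub_pos.mpr hpn
  have hroot : stepCoeff (n - p) p k = √((k : ℝ) * ((n : ℝ) - p + k - 1) * (p + k + 1) * (n + k) /
      (((n : ℝ) + 2 * k - 1) * (n + 2 * k + 1) * (p + k) * (n - p + k))) := by
    unfold stepCoeff
    congr 2 <;> ring
  rw [heunScale, L3f, hroot]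
  field_simp

lemma heunScale_mul_L3b (hpn : p < n) (hα0 : α ≠ 0) (w : ℕ) :
    heunScale n p α * L3b n p α N (w + 1) =
      2 * (w * (w + n + 1)) * ((N + p + 1) * (N + (n - p) + 1)) * couplingCoeff p (n - p) w := by
  have hq : 0 < n - p := sub_pos.mpr hpn
  have hroot : couplingCoeff p (n - p) w = (n - p) * (√p /
      √((n - p) * (p + (w + 1 : ℕ) - 1) * (p + (w + 1 : ℕ)) * (n - p + (w + 1 : ℕ)) *
        (n - p + (w + 1 : ℕ) - 1))) := by
    rw [couplingCoeff, ← Real.sqrt_div hp.le, ← Real.sqrt_sq hq.le, ← Real.sqrt_mul (sq_nonneg _),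
      Real.sqrt_sq hq.le]
    push_cast
    simp only [← add_assoc, add_sub_cancel_right]
    congr 1
    field_simp
  rw [heunScale, L3b, hroot]
  push_cast
  field_simp
  ring

end Scale

theorem heun_orthoRow {n : ℕ} {p α : ℝ} (hp : 0 < p) (hpn : p < n) (hα0 : α ≠ 0) {N : ℕ}
    (i : Fin (2 * (N + 1))) : heun p (n - p) α N (orthoRow p (n - p) i) =
      ∑ j, (heunScale n p α • L3 n p α N) i j • orthoRow p (n - p) j := by
  have hq : 0 < n - p := sub_pos.mpr hpn
  simp only [Matrix.smul_apply, smul_assoc, ← Finset.smul_sum]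
  rcases Nat.even_or_odd' i with ⟨w, hi | hi⟩
  · rw [sum_L3_smul_of_even n p α _ hi]
    simp only [orthoRow_two_mul, orthoRow_two_mul_add_one, smul_add, smul_smul]
    rw [heunScale_mul_L3dO, heunScale_mul_L3b N hp hpn hα0, heunScale_mul_L3e N _ hα0,
      heunScale_mul_L3e N _ hα0, hi, orthoRow_two_mul, heun_normalizedRow hp hq]
    push_cast
    module
  · rw [sum_L3_smul_of_odd n p α _ hi]
    simp only [orthoRow_two_mul, orthoRow_two_mul_add_one, smul_add, smul_smul]
    rw [heunScale_mul_L3dE hp hpn, heunScale_mul_L3b N hp hpn hα0,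
      heunScale_mul_L3f N _ hp hpn hα0, heunScale_mul_L3f N _ hp hpn hα0, hi,
      orthoRow_two_mul_add_one, heun_comp_rev, heun_normalizedRow hq hp, couplingCoeff_comm]
    simp only [Pi.add_comp, Pi.smul_comp, Function.comp_assoc, Fin.rev_involutive.comp_self,
      Function.comp_id]
    push_cast
    module

section Orthonormal

variable (n w : ℕ) (p x : ℝ)

lemma two_pow_mul_Gamma_mul_prod_eq_Gamma_mul_poch :
    2 ^ (w / 2) * Real.Gamma (n / 2 + 1 + (w / 2 : ℕ)) *
        ∏ k ∈ Finset.range ((w + 1) / 2), ((n : ℝ) + 2 * k + 1) =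
      Real.Gamma (n / 2 + 1) * poch (n + 1) w := by
  induction w with
  | zero => simp [poch]
  | succ w ih =>
    rw [poch_succ, ← mul_assoc, ← ih]
    rcases Nat.even_or_odd' w with ⟨m, rfl | rfl⟩
    · rw [show (2 * m + 1) / 2 = m by omega, show 2 * m / 2 = m by omega,
        show (2 * m + 1 + 1) / 2 = m + 1 by omega, Finset.prod_range_succ]
      push_cast
      ring
    · rw [show (2 * m + 1 + 1 + 1) / 2 = m + 1 by omega, show (2 * m + 1 + 1) / 2 = m + 1 by omega,
        show (2 * m + 1) / 2 = m by omega, Nat.cast_add_one, ← add_assoc,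
        Real.Gamma_add_one (by positivity)]
      push_cast
      ring

lemma geg_half_natCast : geg ((n + 1) / 2) w x =
    poch (n + 1) w / w.factorial * (zonal (((n : ℝ) + 1) / 2) w).eval x := by
  rw [geg_natCast, mul_div_cancel₀ _ two_ne_zero]

lemma geg_half_sub_one : geg ((n + 3) / 2) (w - 1) x =
    poch (n + 1) w / (w.factorial * (n + 1)) *
      (derivative (zonal (((n : ℝ) + 1) / 2) w)).eval x := by
  rw [show ((n : ℝ) + 3) / 2 = (n + 1) / 2 + 1 by ring, geg_add_one_sub_one (by positivity),
    mul_div_cancel₀ _ two_ne_zero]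

lemma geg_half_sub_two : geg ((n + 3) / 2) (w - 2) x =
    poch (n + 1) w / (w.factorial * (n + 1)) *
      (x * (derivative (zonal (((n : ℝ) + 1) / 2) w)).eval x -
        w * (zonal (((n : ℝ) + 1) / 2) w).eval x) := by
  rw [show ((n : ℝ) + 3) / 2 = (n + 1) / 2 + 1 by ring, geg_add_one_sub_two (by positivity),
    mul_div_cancel₀ _ two_ne_zero]

variable {p}

lemma Pmat_zero_apply (hp : 0 < p) (j : Fin 2) : Pmat n p w x 0 j =
    poch (n + 1) w / (w.factorial * (n + 1) * (p + w)) * (zonalRow p (n - p) w j).eval x := by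
  fin_cases j
  · simp only [Pmat, one_div, geg_half_natCast, geg_half_sub_two, Fin.isValue, Fin.zero_eta,
      of_apply, cons_val', cons_val_zero, cons_val_fin_one, zonalRow, add_sub_cancel, eval_add,
      eval_mul, eval_C, eval_X]
    field_simp
    ring
  · simp only [Pmat, one_div, geg_half_sub_one, Fin.isValue, Fin.mk_one, of_apply, cons_val',
      cons_val_one, cons_val_fin_one, cons_val_zero, zonalRow, add_sub_cancel]
    field_simp

lemma Pmat_one_apply (hpn : p < n) (j : Fin 2) : Pmat n p w x 1 j =
    poch (n + 1) w / (w.factorial * (n + 1) * (n - p + w)) *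
      (zonalRow (n - p) p w j.rev).eval x := by
  have : 0 < n - p := sub_pos.mpr hpn
  fin_cases j
  · simp only [Pmat, one_div, geg_half_sub_one, Fin.isValue, Fin.zero_eta, of_apply, cons_val',
      cons_val_zero, cons_val_fin_one, cons_val_one, zonalRow, map_sub, map_natCast,
      sub_add_cancel, Fin.rev_zero, Fin.reduceLast]
    field_simp
  · simp only [Pmat, one_div, geg_half_natCast, geg_half_sub_two, Fin.isValue, Fin.mk_one,
      of_apply, cons_val', cons_val_one, cons_val_fin_one, zonalRow, map_sub, map_natCast,
      sub_add_cancel, Fin.reduceRev, cons_val_zero, eval_add, eval_mul, eval_sub, eval_natCast,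
      eval_C, eval_X]
    field_simp
    ring

/-- The factor relating `orthoRow` to the rows of `Q_w`. -/
noncomputable def orthoScale (n : ℕ) : ℝ :=
  √(Real.Gamma (n / 2 + 3 / 2) / (√Real.pi * Real.Gamma (n / 2 + 1) * (n + 1)))

lemma Smat_zero_zero_mul (hp : 0 < p) (hpn : p < n) :
    Smat n p w 0 0 * (poch (n + 1) w / (w.factorial * (n + 1) * (p + w))) =
      orthoScale n * rowScale p (n - p) w := by
  have : 0 < n - p := sub_pos.mpr hpn
  have := Real.Gamma_pos_of_pos (by positivity : 0 < (n : ℝ) / 2 + 3 / 2)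
  have := Real.Gamma_pos_of_pos (by positivity : 0 < (n : ℝ) / 2 + 1)
  have := poch_pos (by positivity : 0 < (n : ℝ) + 1) w
  simp only [Smat, mul_assoc √Real.pi, two_pow_mul_Gamma_mul_prod_eq_Gamma_mul_poch,
    Matrix.smul_apply, diagonal_apply_eq, cons_val_zero, smul_eq_mul]
  rw [← Real.sqrt_mul (by positivity), mul_comm, eq_comm]
  refine sqrt_mul_sqrt_eq (by positivity) (by positivity) ?_
  rw [add_sub_cancel]
  field_simp

variable (p) in
lemma Smat_one_one : Smat n p w 1 1 = Smat n (n - p) w 0 0 := by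
  simp [Smat]

lemma Qmat_apply (hp : 0 < p) (hpn : p < n) (i j : Fin 2) :
    Qmat n p w x i j = orthoScale n * (orthoRow p (n - p) (2 * w + i) j).eval x := by
  fin_cases i
  · calc Qmat n p w x 0 j = Smat n p w 0 0 * Pmat n p w x 0 j := by simp [Qmat, Smat, mul_assoc]
      _ = _ := by
        rw [Pmat_zero_apply n w x hp, ← mul_assoc, Smat_zero_zero_mul n w hp hpn]
        simp [orthoRow_two_mul, normalizedRow, mul_assoc]
  · calc Qmat n p w x 1 j = Smat n p w 1 1 * Pmat n p w x 1 j := by simp [Qmat, Smat, mul_assoc]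
      _ = _ := by
        rw [Pmat_one_apply n w x hpn, Smat_one_one, ← mul_assoc,
          Smat_zero_zero_mul n w (sub_pos.mpr hpn) (sub_lt_self _ hp), sub_sub_cancel]
        simp [orthoRow_two_mul_add_one, normalizedRow, mul_assoc]

lemma Wmat_apply (i j : Fin 2) : Wmat n p x i j =
    (1 - x ^ 2) ^ ((n : ℝ) / 2 - 1) * (weightPoly p (n - p) i j).eval x := by
  fin_cases i <;> fin_cases j <;>
    simp only [Wmat, Fin.isValue, Fin.zero_eta, Fin.mk_one, Matrix.smul_apply, of_apply, cons_val',
      cons_val_zero, cons_val_one, cons_val_fin_one, smul_eq_mul, weightPoly, map_sub, map_natCast,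
      add_sub_cancel, add_sub_assoc, eval_add, eval_mul, eval_sub, eval_neg, eval_natCast, eval_C,
      eval_pow, eval_X]

lemma Mfull_eq_smul_gram (hp : 0 < p) (hpn : p < n) {α : ℝ} (hα : α ∈ Set.Ioo (-1 : ℝ) 1)
    (N : ℕ) : Mfull n p α N = orthoScale n ^ 2 • Matrix.of fun r s =>
      truncatedForm (by linarith : 0 < p + (n - p)) hα (orthoRow p (n - p) r.val)
        (orthoRow p (n - p) s.val) := by
  ext r s
  simp only [Mfull, Mblk, of_apply, Matrix.smul_apply, smul_eq_mul]
  change _ = _ * ∫ x in (-1 : ℝ)..α, _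
  rw [← intervalIntegral.integral_const_mul]
  refine intervalIntegral.integral_congr fun x _ => ?_
  simp only [mul_apply, transpose_apply, Qmat_apply _ _ _ hp hpn, Wmat_apply, Nat.div_add_mod,
    Fin.sum_univ_two, dotProduct, vecMul, eval_add, eval_mul, add_sub_cancel]
  ring

end Orthonormal
end

/-- `L_3` commutes with `M`. -/
theorem stmt_11 (n : ℕ) (hn : 1 ≤ n) (p : ℝ) (hp : 0 < p) (hpn : p < n)
    (N : ℕ) (α : ℝ) (hα : α ∈ Set.Ioo (-1 : ℝ) 1) (hα0 : α ≠ 0) :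
    L3 n p α N * Mfull n p α N = Mfull n p α N * L3 n p α N := by
  have hscale : heunScale n p α ≠ 0 := by
    have : 0 < n - p := sub_pos.mpr hpn
    unfold heunScale
    positivity
  have hselfAdjoint := heun_isSelfAdjoint (by linarith : 0 < p + (n - p)) hα N
  have hcommute := commute_gram_of_isSelfAdjoint hselfAdjoint
    ((L3_isSymm n p α N).smul (heunScale n p α)) (heun_orthoRow hp hpn hα0)
  rw [Mfull_eq_smul_gram n hp hpn hα]
  exact ((Commute.smul_left_iff₀ hscale).mp hcommute).smul_right _
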